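/- arXiv:2202.08186 — 5 statements merged into one kernel-verified Lean document; each statement's English description precedes it below -/
import Mathlib

section
/- Let G = (V,E) be a finite simple graph, let v ∈ V, and let b, f ≥ 0 be integers. Then the number of connected subsets B ⊆ V such that (1) v ∈ B, (2) |B| = b+1, and (3) |N(B)| = f is at most the binomial coefficient C(b+f, b). -/
variable {V : Type} [Fintype V] [DecidableEq V]

/-- The neighborhood `N(B)` of a set of vertices `B`. -/
def nbhdSet (G : SimpleGraph V) (B : Finset V) : Set V :=
  {v | v ∉ B ∧ ∃ u ∈ B, G.Adj u v}

/-- `Q_G(S,v)` (relative to a vertex subset `W`): the set of vertices `w ∈ W ∖ (S ∪ {v})`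
such that `v` and `w` are connected by a path in `G[S ∪ {v,w}]`. -/
def QOn (G : SimpleGraph V) (W S : Finset V) (v : V) : Set V :=
  {w | w ∈ W ∧ w ∉ S ∧ w ≠ v ∧
    (G.induce ((S : Set V) ∪ {v, w})).Reachable ⟨v, by simp⟩ ⟨w, by simp⟩}

/-- `π` is a permutation of `W`, i.e. a bijection from `W` onto `{0, …, |W| - 1}`. -/
def IsPermOn (W : Finset V) (π : V → ℕ) : Prop :=
  Set.BijOn π ↑W ↑(Finset.range W.card)

/-- `TW_{G[W]}(S) = min_{π ∈ Π(W)} max_{v ∈ S} |Q_{G[W]}(π_{<v}, v)|`. -/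
noncomputable def TWOn (G : SimpleGraph V) (W S : Finset V) : ℕ :=
  sInf { m | ∃ π : V → ℕ, IsPermOn W π ∧
    m = S.sup fun v => (QOn G W (W.filter fun w => π w < π v) v).ncard }

/-- `TW_G(S)`. -/
noncomputable def TW (G : SimpleGraph V) (S : Finset V) : ℕ :=
  TWOn G Finset.univ S

/-- `TWR_G(L,S)`: as `TW_G(S)` but minimizing only over permutations having `L` as a prefix. -/
noncomputable def TWR (G : SimpleGraph V) (L S : Finset V) : ℕ :=
  sInf { m | ∃ π : V → ℕ, IsPermOn Finset.univ π ∧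
    (∀ w, w ∈ L ↔ π w < L.card) ∧
    m = S.sup fun v =>
      (QOn G Finset.univ (L ∪ Finset.univ.filter fun w => π w < π v) v).ncard }

/-- A tree decomposition of the induced subgraph `G[W]`. -/
structure TreeDecomp (G : SimpleGraph V) (W : Finset V) where
  ι : Type
  [instFintype : Fintype ι]
  tree : SimpleGraph ι
  isTree : tree.IsTree
  bags : ι → Finset V
  bags_subset : ∀ i, bags i ⊆ W
  covers : ∀ v ∈ W, ∃ i, v ∈ bags i
  covers_edges : ∀ u v : V, u ∈ W → v ∈ W → G.Adj u v → ∃ i, u ∈ bags i ∧ v ∈ bags i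
  subtree : ∀ (v : V) (i j : ι) (hi : v ∈ bags i) (hj : v ∈ bags j),
    (tree.induce {k | v ∈ bags k}).Reachable ⟨i, hi⟩ ⟨j, hj⟩

/-- The width of a tree decomposition: (maximum bag size) − 1. -/
noncomputable def TreeDecomp.width {G : SimpleGraph V} {W : Finset V}
    (D : TreeDecomp G W) : ℤ :=
  letI := D.instFintype
  ((Finset.univ.sup fun i => (D.bags i).card : ℕ) : ℤ) - 1

/-- The treewidth of `G`. -/
noncomputable def tw (G : SimpleGraph V) : ℤ :=
  sInf { w : ℤ | ∃ D : TreeDecomp G Finset.univ, D.width = w }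

/-- `tw(G[W], χ)`: the minimum width of a tree decomposition of `G[W]` having `χ` as a bag. -/
noncomputable def twBagOn (G : SimpleGraph V) (W χ : Finset V) : ℤ :=
  sInf { w : ℤ | ∃ D : TreeDecomp G W, (∃ i, D.bags i = χ) ∧ D.width = w }

/-- `tw(G, χ)`. -/
noncomputable def twBag (G : SimpleGraph V) (χ : Finset V) : ℤ :=
  twBagOn G Finset.univ χ

/-- `P_π(v,w)`: there is a path from `v` to `w` in `G` all of whose internal vertices `u`
satisfy `π u < π v` and `π u < π w`. -/
def Ppred (G : SimpleGraph V) (π : V → ℕ) (v w : V) : Prop :=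
  ∃ p : G.Walk v w, ∀ u ∈ p.support, u ≠ v → u ≠ w → π u < π v ∧ π u < π w

/-- `R_π(v)`. -/
noncomputable def Rval (G : SimpleGraph V) (π : V → ℕ) (v : V) : ℕ :=
  {w | π v < π w ∧ Ppred G π v w}.ncard

/-- `C` is the vertex set of a connected component of `G[A]`. -/
def IsCompOf (G : SimpleGraph V) (A C : Finset V) : Prop :=
  C.Nonempty ∧ C ⊆ A ∧ (G.induce (C : Set V)).Connected ∧
    ∀ u ∈ C, ∀ v ∈ A, G.Adj u v → v ∈ C

/-- `Ω` is a potential maximal clique of `G`. -/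
def PotMaxClique (G : SimpleGraph V) (Ω : Finset V) : Prop :=
  (∀ C : Finset V, IsCompOf G (Finset.univ \ Ω) C → nbhdSet G C ≠ ↑Ω) ∧
  ∀ u ∈ Ω, ∀ v ∈ Ω, u ≠ v →
    G.Adj u v ∨ ∃ C : Finset V, IsCompOf G (Finset.univ \ Ω) C ∧
      u ∈ nbhdSet G C ∧ v ∈ nbhdSet G C


def famA (G : SimpleGraph V) (S F : Finset V) (b f : ℕ) : Set (Finset V) :=
  {B | S ⊆ B ∧ (F : Set V) ⊆ nbhdSet G B ∧ B.card = S.card + b ∧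
    (nbhdSet G B).ncard = F.card + f ∧
    ∀ T : Finset V, S ⊆ T → T ⊆ B → T ≠ B → ∃ u ∈ T, ∃ w ∈ B, w ∉ T ∧ G.Adj u w}

theorem famA_sub (G : SimpleGraph V) (S F : Finset V) (b f : ℕ) (w : V) (hwS : w ∉ S)
    (hwF : w ∉ F) (hw : ∃ u ∈ S, G.Adj u w) (B : Finset V) (hB : B ∈ famA G S F b f) :
    (∃ b', b = b' + 1 ∧ B ∈ famA G (insert w S) F b' f) ∨
    (∃ f', f = f' + 1 ∧ B ∈ famA G S (insert w F) b f') := by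
  obtain ⟨h1, h2, h3, h4, h5⟩ := hB
  by_cases hwB : w ∈ B
  · left
    have hsub : insert w S ⊆ B := Finset.insert_subset hwB h1
    have hc := Finset.card_le_card hsub
    have hi := Finset.card_insert_of_notMem hwS
    refine ⟨b - 1, by omega, hsub, h2, by omega, h4, ?_⟩
    intro T hT
    exact h5 T ((Finset.subset_insert w S).trans hT)
  · right
    have hsub : ((insert w F : Finset V) : Set V) ⊆ nbhdSet G B := by
      rw [Finset.coe_insert]
      refine Set.insert_subset ?_ h2
      obtain ⟨u, hu, ha⟩ := hw
      exact ⟨hwB, u, h1 hu, ha⟩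
    have hc := Set.ncard_le_ncard hsub (Set.toFinite _)
    rw [Set.ncard_coe_finset] at hc
    have hi := Finset.card_insert_of_notMem hwF
    exact ⟨f - 1, by omega, h1, hsub, h3, by omega, h5⟩

theorem famA_card (G : SimpleGraph V) (n : ℕ) : ∀ (S F : Finset V) (b f : ℕ), b + f = n →
    (famA G S F b f).ncard ≤ (b + f).choose b := by
  induction n with
  | zero =>
    intro S F b f h
    obtain ⟨rfl, rfl⟩ : b = 0 ∧ f = 0 := by omega
    have : famA G S F 0 0 ⊆ {S} := by
      rintro B ⟨h1, -, h3, -, -⟩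
      exact (Finset.eq_of_subset_of_card_le h1 (by omega)).symm
    simpa using Set.ncard_le_ncard this
  | succ n ih =>
    intro S F b f h
    by_cases hw : ∃ w, w ∉ S ∧ w ∉ F ∧ ∃ u ∈ S, G.Adj u w
    · obtain ⟨w, hwS, hwF, hw⟩ := hw
      have key := famA_sub G S F b f w hwS hwF hw
      rcases b with _ | b
      · rcases f with _ | f
        · omega
        have : famA G S F 0 (f+1) ⊆ famA G S (insert w F) 0 f := by
          intro B hB
          rcases key B hB with ⟨b', h', _⟩ | ⟨f', h', h''⟩
          · omega
          · obtain rfl : f = f' := by omega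
            exact h''
        have h1 := Set.ncard_le_ncard this (Set.toFinite _)
        have h2 := ih S (insert w F) 0 f (by omega)
        refine (h1.trans h2).trans ?_
        simp
      · rcases f with _ | f
        · have : famA G S F (b+1) 0 ⊆ famA G (insert w S) F b 0 := by
            intro B hB
            rcases key B hB with ⟨b', h', h''⟩ | ⟨f', h', h''⟩
            · obtain rfl : b = b' := by omega
              exact h''
            · omega
          have h1 := Set.ncard_le_ncard this (Set.toFinite _)
          have h2 := ih (insert w S) F b 0 (by omega)
          refine (h1.trans h2).trans ?_
          simp
        · have : famA G S F (b+1) (f+1) ⊆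
              famA G (insert w S) F b (f+1) ∪ famA G S (insert w F) (b+1) f := by
            intro B hB
            rcases key B hB with ⟨b', h', h''⟩ | ⟨f', h', h''⟩
            · obtain rfl : b = b' := by omega
              exact Or.inl h''
            · obtain rfl : f = f' := by omega
              exact Or.inr h''
          have h1 := Set.ncard_le_ncard this (Set.toFinite _)
          have h0 := Set.ncard_union_le (famA G (insert w S) F b (f+1))
            (famA G S (insert w F) (b+1) f)
          have h2 := ih (insert w S) F b (f+1) (by omega)
          have h3 := ih S (insert w F) (b+1) f (by omega)
          have h4 : (b + 1 + (f + 1)).choose (b+1)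
              = (b + (f+1)).choose b + (b + 1 + f).choose (b+1) := by
            rw [show b + 1 + (f + 1) = (b + (f+1)) + 1 by ring, Nat.choose_succ_succ,
              show b + 1 + f = b + (f+1) by ring]
          omega
    · have : famA G S F b f ⊆ {S} := by
        rintro B ⟨h1, h2, h3, h4, h5⟩
        by_contra hne
        obtain ⟨u, hu, w, hwB, hwS, ha⟩ := h5 S subset_rfl h1 (fun e => hne e.symm)
        exact hw ⟨w, hwS, fun hF => (h2 hF).1 hwB, u, hu, ha⟩
      have h1 := Set.ncard_le_ncard this
      rw [Set.ncard_singleton] at h1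
      exact h1.trans (Nat.choose_pos (by omega))

theorem conn_step (G : SimpleGraph V) (v : V) (B T : Finset V)
    (hc : (G.induce (B : Set V)).Connected) (hv : v ∈ T) (hT : T ⊆ B) (hne : T ≠ B) :
    ∃ u ∈ T, ∃ w ∈ B, w ∉ T ∧ G.Adj u w := by
  obtain ⟨x, hxB, hxT⟩ := Finset.exists_of_ssubset (hT.ssubset_of_ne hne)
  obtain ⟨p⟩ := hc.preconnected ⟨v, hT hv⟩ ⟨x, hxB⟩
  obtain ⟨d, -, h1, h2⟩ := p.exists_boundary_dart {y | (y : V) ∈ T} hv hxT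
  exact ⟨d.fst, h1, d.snd, d.snd.2, h2, d.adj⟩

theorem stmt0 (G : SimpleGraph V) (v : V) (b f : ℕ) :
    {B : Finset V | v ∈ B ∧ B.card = b + 1 ∧
        (G.induce (B : Set V)).Connected ∧ (nbhdSet G B).ncard = f}.ncard
      ≤ (b + f).choose b := by
  refine le_trans (Set.ncard_le_ncard ?_ (Set.toFinite _)) (famA_card G _ {v} ∅ b f rfl)
  rintro B ⟨h1, h2, h3, h4⟩
  refine ⟨by simpa using h1, by simp, by simp; omega, by simpa using h4, ?_⟩
  intro T hT
  exact conn_step G v B T h3 (hT (by simp))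
end

section
/- Let G = (V,E) be a finite simple graph with V nonempty and let k be a non-negative integer. Then tw(G) ≤ k if and only if there exists a permutation π ∈ Π(V) such that R_π(v) ≤ k for every v ∈ V. -/
variable {V : Type} [Fintype V] [DecidableEq V]

theorem aux_parent {ι : Type} (T : SimpleGraph ι) (hT : T.IsTree) :
    ∃ (p : ι → ι) (d : ι → ℕ), ∀ a b, T.Adj a b →
      (p a = b ∧ d a = d b + 1) ∨ (p b = a ∧ d b = d a + 1) := by
  classical
  obtain ⟨r⟩ := hT.connected.nonempty
  choose q hq hu using fun v => hT.existsUnique_path v r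
  refine ⟨fun v => (q v).snd, fun v => (q v).length, fun a b hab => ?_⟩
  by_cases hb : a ∈ (q b).support
  · right
    have h2 : b ∉ (q a).support := by
      intro hba
      have e1 := hu b _ ((hq a).dropUntil hba)
      have e2 := hu a _ ((hq b).dropUntil hb)
      have l1 := (q a).length_dropUntil_le_length hba
      have l2 := (q b).length_dropUntil_le_length hb
      have l3 : (q a).length = ((q a).takeUntil b hba).length + ((q a).dropUntil b hba).length := by
        rw [← SimpleGraph.Walk.length_append, SimpleGraph.Walk.take_spec]
      rw [e1] at l3 l1
      rw [e2] at l2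
      have : ((q a).takeUntil b hba).length = 0 := by omega
      exact hab.ne (SimpleGraph.Walk.eq_of_length_eq_zero this)
    have e := hu b _ (SimpleGraph.Walk.IsPath.cons (hq a) (h := hab.symm) h2)
    dsimp only at e ⊢
    rw [← e]
    simp
  · left
    have e := hu a _ (SimpleGraph.Walk.IsPath.cons (hq b) (h := hab) hb)
    dsimp only at e ⊢
    rw [← e]
    simp

def AuxD {ι : Type} (p : ι → ι) (d : ι → ℕ) (x y : ι) : Prop :=
  ∃ n, p^[n] y = x ∧ d y = d x + n

theorem aux_step {ι : Type} {T : SimpleGraph ι} {p : ι → ι} {d : ι → ℕ}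
    (h : ∀ a b, T.Adj a b → (p a = b ∧ d a = d b + 1) ∨ (p b = a ∧ d b = d a + 1))
    {x y z : ι} (hy : AuxD p d x y) (hyz : T.Adj y z) :
    (y = x ∧ d z < d x) ∨ (AuxD p d x z) := by
  obtain ⟨n, hn, hd⟩ := hy
  rcases h y z hyz with ⟨h1, h2⟩ | ⟨h1, h2⟩
  · cases n with
    | zero => left; simp at hn; subst hn; exact ⟨rfl, by omega⟩
    | succ n => right; exact ⟨n, by rw [← h1]; simpa using hn, by omega⟩
  · right
    exact ⟨n + 1, by simpa [h1] using hn, by omega⟩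

theorem aux_walk {ι : Type} {T : SimpleGraph ι} {S : Set ι} (Q : ι → Prop)
    (hQ : ∀ y z, y ∈ S → z ∈ S → Q y → T.Adj y z → Q z) {a b : S}
    (w : (T.induce S).Walk a b) (ha : Q a) : Q b := by
  induction w with
  | nil => exact ha
  | @cons u v w h _ ih => exact ih (hQ u v u.2 v.2 ha h)

theorem aux_walk2 {V : Type} {G : SimpleGraph V} (Q : V → Prop) {a w : V}
    (q : G.Walk a w) (hQ : ∀ y z, y ∈ q.support → y ≠ w → Q y → G.Adj y z → Q z)
    (ha : Q a) : Q w := by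
  induction q with
  | nil => exact ha
  | @cons u v w h r ih =>
    by_cases huw : u = w
    · exact huw ▸ ha
    · exact ih (fun y z hy => hQ y z (by simp [hy])) (hQ u v (by simp) huw ha h)

theorem aux_perm (V : Type) [Fintype V] [DecidableEq V] (t : V → ℕ) :
    ∃ π : V → ℕ, IsPermOn (Finset.univ : Finset V) π ∧ ∀ v w, π v < π w → t w ≤ t v := by
  let e := Fintype.equivFin V
  let f : Fin (Fintype.card V) → ℕᵒᵈ := fun i => OrderDual.toDual (t (e.symm i))
  let σ := Tuple.sort f
  have hm := Tuple.monotone_sort f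
  refine ⟨fun v => (σ.symm (e v) : ℕ), ⟨?_, ?_, ?_⟩, ?_⟩
  · intro v _
    simp
  · intro v _ w _ h
    simpa [Fin.val_inj] using h
  · intro i hi
    have hi' : i < Fintype.card V := by simpa using hi
    exact ⟨e.symm (σ ⟨i, hi'⟩), by simp, by simp⟩
  · intro v w h
    have := hm (show σ.symm (e v) ≤ σ.symm (e w) from le_of_lt h)
    simpa [f, σ] using this

theorem aux_fwd {V : Type} [Fintype V] [DecidableEq V] (G : SimpleGraph V) (k : ℕ)
    (D : TreeDecomp G Finset.univ) (hD : D.width ≤ k) :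
    ∃ π : V → ℕ, IsPermOn (Finset.univ : Finset V) π ∧ ∀ v : V, Rval G π v ≤ k := by
  classical
  letI := D.instFintype
  obtain ⟨p, d, hpd⟩ := aux_parent D.tree D.isTree
  have htop : ∀ v : V, ∃ x, v ∈ D.bags x ∧ ∀ y, v ∈ D.bags y → d x ≤ d y := by
    intro v
    obtain ⟨i, hi⟩ := D.covers v (Finset.mem_univ v)
    obtain ⟨x, hx, hm⟩ := Finset.exists_min_image (Finset.univ.filter fun x => v ∈ D.bags x) d
      ⟨i, by simpa using hi⟩
    exact ⟨x, by simpa using hx, fun y hy => hm y (by simpa using hy)⟩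
  choose top htop hmin using htop
  obtain ⟨π, hπ, hord⟩ := aux_perm V (fun v => d (top v))
  refine ⟨π, hπ, fun v => ?_⟩
  have hcard : (D.bags (top v)).card ≤ k + 1 := by
    have h1 : (D.bags (top v)).card ≤ Finset.univ.sup fun i => (D.bags i).card :=
      Finset.le_sup (f := fun i => (D.bags i).card) (Finset.mem_univ _)
    unfold TreeDecomp.width at hD
    have h2 : (Finset.univ.sup fun i => (D.bags i).card) ≤ k + 1 := by
      zify
      linarith
    omega
  have hsub : {w | π v < π w ∧ Ppred G π v w} ⊆ (((D.bags (top v)).erase v : Finset V) : Set V) := by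
    rintro w ⟨hvw, q, hq⟩
    have hne : w ≠ v := by rintro rfl; exact lt_irrefl _ hvw
    have key : ∃ i, w ∈ D.bags i ∧ AuxD p d (top v) i := by
      refine aux_walk2 (fun u => ∃ i, u ∈ D.bags i ∧ AuxD p d (top v) i) q ?_
        ⟨top v, htop v, 0, rfl, rfl⟩
      rintro y z hy hyw ⟨i, hi, hid⟩ hadj
      have hle : d (top v) ≤ d (top y) := by
        by_cases hyv : y = v
        · rw [hyv]
        · exact hord y v (hq y hy hyv hyw).1
      obtain ⟨j, hj, hjz⟩ := D.covers_edges y z (Finset.mem_univ _) (Finset.mem_univ _) hadj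
      refine ⟨j, hjz, ?_⟩
      obtain ⟨wk⟩ := D.subtree y i j hi hj
      refine aux_walk (AuxD p d (top v)) ?_ wk hid
      intro a b _ hb hda hab
      rcases aux_step hpd hda hab with ⟨_, h⟩ | h
      · have := hmin y b hb
        omega
      · exact h
    obtain ⟨i, hi, hid⟩ := key
    have hx : w ∈ D.bags (top v) := by
      by_contra hcon
      obtain ⟨wk⟩ := D.subtree w i (top w) hi (htop w)
      have : AuxD p d (top v) (top w) := by
        refine aux_walk (AuxD p d (top v)) ?_ wk hid
        intro a b ha _ hda hab
        rcases aux_step hpd hda hab with ⟨h, _⟩ | h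
        · subst h; exact absurd ha hcon
        · exact h
      obtain ⟨n, hn, hdn⟩ := this
      have hle := hord v w hvw
      have hn0 : n = 0 := by
        omega
      subst hn0
      simp at hn
      exact hcon (hn ▸ htop w)
    simp [hne, hx]
  unfold Rval
  have h3 := Set.ncard_le_ncard hsub (Finset.finite_toSet _)
  rw [Set.ncard_coe_finset, Finset.card_erase_of_mem (htop v)] at h3
  omega

theorem aux_tree {V : Type} [Fintype V] (π : V → ℕ) (r : V) (p : V → V)
    (hp : ∀ v, v ≠ r → π v < π (p v)) (hr : ∀ v, π v ≤ π r) :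
    (SimpleGraph.fromRel fun a b => a ≠ r ∧ b = p a).IsTree := by
  classical
  set T := SimpleGraph.fromRel fun a b => a ≠ r ∧ b = p a with hT
  have hadj : ∀ v, v ≠ r → T.Adj v (p v) := by
    intro v hv
    have : v ≠ p v := fun h => absurd (hp v hv) (by rw [← h]; exact lt_irrefl _)
    simp [hT, this, hv]
  have hreach : ∀ n v, π r - π v = n → T.Reachable v r := by
    intro n
    induction n using Nat.strong_induction_on with
    | _ n ih =>
      intro v hv
      by_cases h : v = r
      · rw [h]
      · have h1 := hp v h
        have h2 := hr (p v)
        exact (hadj v h).reachable.trans (ih _ (by omega) (p v) rfl)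
  have hconn : T.Connected := by
    haveI : Nonempty V := ⟨r⟩
    exact ⟨fun a b => (hreach _ a rfl).trans (hreach _ b rfl).symm⟩
  rw [SimpleGraph.isTree_iff_connected_and_card]
  refine ⟨hconn, le_antisymm ?_ hconn.card_vert_le_card_edgeSet_add_one⟩
  have hsub : T.edgeSet ⊆ (((Finset.univ.erase r).image fun v => s(v, p v) : Finset (Sym2 V)) : Set (Sym2 V)) := by
    intro e
    induction e using Sym2.ind with
    | _ a b =>
      intro h
      have h' : T.Adj a b := h
      rw [hT, SimpleGraph.fromRel_adj] at h'
      rcases h'.2 with ⟨h1, h2⟩ | ⟨h1, h2⟩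
      · simp only [Finset.coe_image, Set.mem_image]
        exact ⟨a, by simpa using h1, by rw [h2]⟩
      · simp only [Finset.coe_image, Set.mem_image]
        exact ⟨b, by simpa using h1, by rw [h2, Sym2.eq_swap]⟩
  have h3 := Set.ncard_le_ncard hsub (Finset.finite_toSet _)
  rw [Set.ncard_coe_finset] at h3
  have h4 := h3.trans Finset.card_image_le
  rw [Finset.card_erase_of_mem (Finset.mem_univ r), Finset.card_univ] at h4
  have h5 : 0 < Fintype.card V := Fintype.card_pos_iff.2 ⟨r⟩
  rw [Nat.card_eq_fintype_card (α := V), Nat.card_coe_set_eq]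
  omega

theorem aux_symm {V : Type} [Fintype V] [DecidableEq V] {G : SimpleGraph V} {π : V → ℕ} {u v : V}
    (h : Ppred G π u v) : Ppred G π v u := by
  obtain ⟨q, hq⟩ := h
  exact ⟨q.reverse, fun x hx h1 h2 => (hq x (by simpa using hx) h2 h1).symm⟩

theorem aux_trans {V : Type} [Fintype V] [DecidableEq V] {G : SimpleGraph V} {π : V → ℕ}
    {u v w : V} (huv : π u < π v) (huw : π u < π w)
    (h1 : Ppred G π u v) (h2 : Ppred G π u w) : Ppred G π v w := by
  obtain ⟨q1, hq1⟩ := h1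
  obtain ⟨q2, hq2⟩ := h2
  refine ⟨q1.reverse.append q2, fun x hx hv hw => ?_⟩
  by_cases hxu : x = u
  · subst hxu; exact ⟨huv, huw⟩
  rw [SimpleGraph.Walk.mem_support_append_iff] at hx
  rcases hx with hx | hx
  · have := hq1 x (by simpa using hx) hxu hv
    omega
  · have := hq2 x hx hxu hw
    omega

theorem aux_bwd {V : Type} [Fintype V] [DecidableEq V] [Nonempty V] (G : SimpleGraph V) (k : ℕ)
    (π : V → ℕ) (hπ : IsPermOn (Finset.univ : Finset V) π) (hR : ∀ v : V, Rval G π v ≤ k) :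
    ∃ D : TreeDecomp G Finset.univ, D.width ≤ k := by
  classical
  have hinj : Function.Injective π := fun a b h => hπ.2.1 (by simp) (by simp) h
  obtain ⟨r, hr⟩ := Finite.exists_max π
  let N : V → Finset V := fun v => Finset.univ.filter fun w => π v < π w ∧ Ppred G π v w
  have hpar : ∀ v, ∃ x, (v ≠ r → π v < π x) ∧ ((N v).Nonempty → x ∈ N v ∧ ∀ w ∈ N v, π x ≤ π w) := by
    intro v
    by_cases hN : (N v).Nonempty
    · obtain ⟨x, hx, hm⟩ := Finset.exists_min_image (N v) π hN
      refine ⟨x, fun _ => ?_, fun _ => ⟨hx, hm⟩⟩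
      exact (Finset.mem_filter.1 hx).2.1
    · exact ⟨r, fun h => lt_of_le_of_ne (hr v) (fun h' => h (hinj h')), fun h => absurd h hN⟩
  choose p hp hpN using hpar
  have hmemN : ∀ v w, w ∈ N v ↔ π v < π w ∧ Ppred G π v w := by intro v w; simp [N]
  let T : SimpleGraph V := SimpleGraph.fromRel fun a b => a ≠ r ∧ b = p a
  have hreach : ∀ (v : V) (n : ℕ) (i : V) (hi : v ∈ insert i (N i)), π v - π i = n →
      (T.induce {k | v ∈ insert k (N k)}).Reachable ⟨i, hi⟩ ⟨v, Finset.mem_insert_self _ _⟩ := by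
    intro v n
    induction n using Nat.strong_induction_on with
    | _ n ih =>
      intro i hi hn
      by_cases hvi : v = i
      · subst hvi; exact SimpleGraph.Reachable.refl _
      have hvN : v ∈ N i := by
        rcases Finset.mem_insert.1 hi with h | h
        · exact absurd h hvi
        · exact h
      obtain ⟨hpi, hpm⟩ := hpN i ⟨v, hvN⟩
      have hle := hpm v hvN
      have a1 := (hmemN _ _).1 hvN
      have a2 := (hmemN _ _).1 hpi
      have hmem : v ∈ insert (p i) (N (p i)) := by
        by_cases h : v = p i
        · rw [h]; exact Finset.mem_insert_self _ _
        · refine Finset.mem_insert_of_mem ((hmemN _ _).2 ⟨?_, aux_trans a2.1 a1.1 a2.2 a1.2⟩)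
          exact lt_of_le_of_ne hle (fun h' => h (hinj h').symm)
      have hir : i ≠ r := by
        rintro rfl
        exact absurd a1.1 (not_lt.2 (hr v))
      have hadj : T.Adj i (p i) := by
        have : i ≠ p i := fun h => absurd a2.1 (by rw [← h]; exact lt_irrefl _)
        simp [T, this, hir]
      have hstep : (T.induce {k | v ∈ insert k (N k)}).Adj ⟨i, hi⟩ ⟨p i, hmem⟩ := hadj
      exact hstep.reachable.trans (ih _ (by omega) (p i) hmem rfl)
  have hedge : ∀ u v, G.Adj u v → Ppred G π u v := by
    intro u v h
    refine ⟨h.toWalk, fun x hx h1 h2 => ?_⟩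
    simp at hx
    tauto
  refine ⟨{ ι := V, tree := T, isTree := aux_tree π r p hp hr, bags := fun v => insert v (N v),
            bags_subset := fun i => Finset.subset_univ _,
            covers := fun v _ => ⟨v, Finset.mem_insert_self _ _⟩,
            covers_edges := ?_, subtree := ?_ }, ?_⟩
  · intro u v _ _ h
    rcases lt_or_gt_of_ne (fun h' => h.ne (hinj h') : π u ≠ π v) with hlt | hlt
    · exact ⟨u, Finset.mem_insert_self _ _,
        Finset.mem_insert_of_mem ((hmemN _ _).2 ⟨hlt, hedge _ _ h⟩)⟩
    · exact ⟨v, Finset.mem_insert_of_mem ((hmemN _ _).2 ⟨hlt, hedge _ _ h.symm⟩),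
        Finset.mem_insert_self _ _⟩
  · intro v i j hi hj
    exact (hreach v _ i hi rfl).trans (hreach v _ j hj rfl).symm
  · unfold TreeDecomp.width
    have : (Finset.univ.sup fun i => (insert i (N i)).card) ≤ k + 1 := by
      refine Finset.sup_le fun i _ => (Finset.card_insert_le _ _).trans ?_
      have := hR i
      unfold Rval at this
      have e : {w | π i < π w ∧ Ppred G π i w} = ((N i : Finset V) : Set V) := by
        ext w; simp [N]
      rw [e, Set.ncard_coe_finset] at this
      omega
    dsimp only
    zify at this
    linarith

theorem stmt1 [Nonempty V] (G : SimpleGraph V) (k : ℕ) :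
    tw G ≤ (k : ℤ) ↔
      ∃ π : V → ℕ, IsPermOn (Finset.univ : Finset V) π ∧ ∀ v : V, Rval G π v ≤ k := by
  have hbdd : BddBelow { w : ℤ | ∃ D : TreeDecomp G Finset.univ, D.width = w } := by
    refine ⟨-1, ?_⟩
    rintro w ⟨D, rfl⟩
    unfold TreeDecomp.width
    omega
  constructor
  · intro h
    have hne : { w : ℤ | ∃ D : TreeDecomp G Finset.univ, D.width = w }.Nonempty := by
      obtain ⟨π, hπ, _⟩ := aux_perm V (fun _ => 0)
      obtain ⟨D, _⟩ := aux_bwd G (Finset.univ.sup (Rval G π)) π hπ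
        (fun v => Finset.le_sup (Finset.mem_univ v))
      exact ⟨_, D, rfl⟩
    obtain ⟨D, hD⟩ := Int.csInf_mem hne hbdd
    refine aux_fwd G k D ?_
    rw [hD]
    exact h
  · rintro ⟨π, hπ, hR⟩
    obtain ⟨D, hD⟩ := aux_bwd G k π hπ hR
    exact (csInf_le hbdd ⟨D, rfl⟩).trans hD
end

section
/- Let G = (V,E) be a finite simple graph with V nonempty. Then tw(G) = TW_G(V). -/
variable {V : Type} [Fintype V] [DecidableEq V]

theorem reach_closed {α : Type} (H : SimpleGraph α) (A : Set α) (P : α → Prop)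
    (hstep : ∀ x ∈ A, ∀ y ∈ A, H.Adj x y → P x → P y)
    (a b : A) (h : (H.induce A).Reachable a b) (ha : P a) : P b := by
  obtain ⟨p⟩ := h
  induction p with
  | nil => exact ha
  | @cons u v w hadj q ih =>
    exact ih (hstep u u.2 v v.2 (by simpa using hadj) ha)

theorem reach_mono {α : Type} (H : SimpleGraph α) (A B : Set α) (hAB : A ⊆ B) (a b : α)
    (ha : a ∈ A) (hb : b ∈ A) (h : (H.induce A).Reachable ⟨a, ha⟩ ⟨b, hb⟩) :
    (H.induce B).Reachable ⟨a, hAB ha⟩ ⟨b, hAB hb⟩ :=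
  h.map (SimpleGraph.induceHomOfLE H hAB).toHom

theorem parent_tree {α : Type} [Fintype α] (p : α → α) (π : α → ℕ) (r : α)
    (hmax : ∀ v, π v ≤ π r)
    (hp : ∀ v, v ≠ r → π v < π (p v)) (hr : p r = r) :
    (SimpleGraph.fromRel (fun x y => p x = y)).IsTree := by
  classical
  set T := SimpleGraph.fromRel (fun x y => p x = y) with hT
  have hreach : ∀ n v, π r - π v ≤ n → T.Reachable v r := by
    intro n
    induction n with
    | zero =>
      intro v hv
      by_cases h : v = r
      · subst h; exact SimpleGraph.Reachable.refl _
      · have := hp v h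
        have := hmax (p v)
        omega
    | succ n ih =>
      intro v hv
      by_cases h : v = r
      · subst h; exact SimpleGraph.Reachable.refl _
      · have h1 := hp v h
        have h2 := hmax (p v)
        have hadj : T.Adj v (p v) := by
          rw [hT, SimpleGraph.fromRel_adj]
          exact ⟨fun e => by rw [← e] at h1; omega, Or.inl rfl⟩
        exact hadj.reachable.trans (ih (p v) (by omega))
  have hconn : T.Connected := by
    haveI : Nonempty α := ⟨r⟩
    exact ⟨fun u v => (hreach _ u le_rfl).trans (hreach _ v le_rfl).symm⟩
  rw [SimpleGraph.isTree_iff_connected_and_card]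
  refine ⟨hconn, ?_⟩
  have h1 := hconn.card_vert_le_card_edgeSet_add_one
  have h2 : T.edgeFinset ⊆ (Finset.univ.erase r).image (fun v => s(v, p v)) := by
    intro e he
    induction e with
    | _ x y =>
      rw [SimpleGraph.mem_edgeFinset, SimpleGraph.mem_edgeSet, hT, SimpleGraph.fromRel_adj] at he
      obtain ⟨hne, h | h⟩ := he
      · refine Finset.mem_image.2 ⟨x, ?_, by rw [h]⟩
        simp only [Finset.mem_erase, Finset.mem_univ, and_true]
        rintro rfl; exact hne (by rw [← h, hr])
      · refine Finset.mem_image.2 ⟨y, ?_, by rw [h, Sym2.eq_swap]⟩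
        simp only [Finset.mem_erase, Finset.mem_univ, and_true]
        rintro rfl; exact hne (by rw [← h, hr])
  have h3 := (Finset.card_le_card h2).trans Finset.card_image_le
  rw [Finset.card_erase_of_mem (Finset.mem_univ _), Finset.card_univ] at h3
  have h4 : 0 < Fintype.card α := Fintype.card_pos_iff.2 ⟨r⟩
  rw [← SimpleGraph.coe_edgeFinset, Nat.card_coe_set_eq, Set.ncard_coe_finset,
    Nat.card_eq_fintype_card] at *
  omega

theorem exists_decomp [Nonempty V] (G : SimpleGraph V) (π : V → ℕ)
    (hπ : IsPermOn Finset.univ π) :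
    ∃ D : TreeDecomp G Finset.univ, D.width ≤ ((Finset.univ.sup fun v =>
      (QOn G Finset.univ (Finset.univ.filter fun w => π w < π v) v).ncard : ℕ) : ℤ) := by
  classical
  have hinj : ∀ x y, π x = π y → x = y := fun x y h => hπ.injOn (by simp) (by simp) h
  obtain ⟨r, hr⟩ := Finite.exists_max π
  let Q : V → Set V := fun v => QOn G Finset.univ (Finset.univ.filter fun w => π w < π v) v
  have hQlt : ∀ v x, x ∈ Q v → π v < π x := by
    rintro v x ⟨-, h1, h2, -⟩
    simp at h1
    exact lt_of_le_of_ne h1 (fun h => h2 (hinj _ _ h).symm)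
  have hex : ∀ v, ∃ u, (v ≠ r → π v < π u) ∧ (v = r → u = r) ∧
      ∀ x ∈ Q v, u ∈ Q v ∧ π u ≤ π x := by
    intro v
    by_cases hne : (Q v).Nonempty
    · obtain ⟨u, hu, hmin⟩ := Set.exists_min_image (Q v) π (Set.toFinite _) hne
      have := hQlt v u hu
      exact ⟨u, fun _ => this, fun e => by subst e; have := hr u; omega,
        fun x hx => ⟨hu, hmin x hx⟩⟩
    · refine ⟨r, fun h => lt_of_le_of_ne (hr v) (fun e => h (hinj _ _ e)), fun _ => rfl, ?_⟩
      intro x hx; exact absurd ⟨x, hx⟩ hne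
  choose p hp1 hp2 hp3 using hex
  have htree := parent_tree p π r hr hp1 (hp2 r rfl)
  have hQstep : ∀ k x, x ∈ Q k → p k ≠ x → x ∈ Q (p k) := by
    intro k x hx hne
    obtain ⟨hpk, hle⟩ := hp3 k x hx
    have hlt : π (p k) < π x := lt_of_le_of_ne hle (fun e => hne (hinj _ _ e))
    have hk := hQlt _ _ hpk
    refine ⟨Finset.mem_univ _, by simpa using hle, hne.symm, ?_⟩
    have a1 := hpk.2.2.2
    have a2 := hx.2.2.2
    refine SimpleGraph.Reachable.trans (reach_mono G _ _ ?_ _ _ _ _ a1).symm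
      (reach_mono G _ _ ?_ _ _ _ _ a2)
    · intro z hz
      simp at hz ⊢
      rcases hz with rfl | rfl | hz
      · right; right; exact hk
      · left; rfl
      · right; right; omega
    · intro z hz
      simp at hz ⊢
      rcases hz with rfl | rfl | hz
      · right; right; exact hk
      · right; left; rfl
      · right; right; omega
  have hQadj : ∀ u v, G.Adj u v → π u < π v → v ∈ Q u := by
    intro u v h hlt
    refine ⟨Finset.mem_univ _, by simpa using hlt.le, h.ne', ?_⟩
    apply SimpleGraph.Adj.reachable
    simpa using h
  let bags : V → Finset V := fun v => insert v (Q v).toFinset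
  have hmem : ∀ x k, x ∈ bags k ↔ x = k ∨ x ∈ Q k := by intro x k; simp [bags]
  have hsub : ∀ (x : V) (n : ℕ) (k : V) (hk : x ∈ bags k) , π r - π k ≤ n →
      ((SimpleGraph.fromRel (fun x y => p x = y)).induce {k | x ∈ bags k}).Reachable
        ⟨k, hk⟩ ⟨x, (hmem x x).2 (Or.inl rfl)⟩ := by
    intro x n
    induction n with
    | zero =>
      intro k hk hn
      rcases (hmem x k).1 hk with rfl | h
      · exact SimpleGraph.Reachable.refl _
      · have := hQlt _ _ h
        have := hr x
        omega
    | succ n ih =>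
      intro k hk hn
      rcases (hmem x k).1 hk with rfl | h
      · exact SimpleGraph.Reachable.refl _
      · have h1 := hQlt _ _ h
        have h2 := hr x
        have h3 := hQlt _ _ (hp3 k x h).1
        have h4 : x ∈ bags (p k) := by
          rw [hmem]
          by_cases e : p k = x
          · exact Or.inl e.symm
          · exact Or.inr (hQstep k x h e)
        refine SimpleGraph.Reachable.trans (SimpleGraph.Adj.reachable ?_) (ih (p k) h4 (by omega))
        simp only [SimpleGraph.comap_adj, SimpleGraph.fromRel_adj, Function.Embedding.subtype_apply]
        exact ⟨fun e => by rw [← e] at h3; omega, by simp⟩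
  let D : TreeDecomp G Finset.univ :=
    { ι := V
      tree := SimpleGraph.fromRel (fun x y => p x = y)
      isTree := htree
      bags := bags
      bags_subset := fun i => Finset.subset_univ _
      covers := fun v _ => ⟨v, (hmem v v).2 (Or.inl rfl)⟩
      covers_edges := by
        intro u v _ _ h
        rcases lt_trichotomy (π u) (π v) with hlt | he | hlt
        · exact ⟨u, (hmem _ _).2 (Or.inl rfl), (hmem _ _).2 (Or.inr (hQadj u v h hlt))⟩
        · exact absurd (hinj _ _ he) h.ne
        · exact ⟨v, (hmem _ _).2 (Or.inr (hQadj v u h.symm hlt)), (hmem _ _).2 (Or.inl rfl)⟩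
      subtree := fun v i j hi hj => (hsub v _ i hi le_rfl).trans (hsub v _ j hj le_rfl).symm }
  refine ⟨D, ?_⟩
  have hb : (Finset.univ.sup fun i => (bags i).card) ≤ (Finset.univ.sup fun v =>
      (QOn G Finset.univ (Finset.univ.filter fun w => π w < π v) v).ncard) + 1 := by
    refine Finset.sup_le fun i _ => ?_
    refine (Finset.card_insert_le _ _).trans ?_
    rw [← Set.ncard_eq_toFinset_card']
    exact Nat.succ_le_succ (Finset.le_sup (f := fun v =>
      (QOn G Finset.univ (Finset.univ.filter fun w => π w < π v) v).ncard) (Finset.mem_univ i))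
  show ((Finset.univ.sup fun i => (bags i).card : ℕ) : ℤ) - 1 ≤ _
  omega

theorem exists_order (f : V → ℕ) : ∃ π : V → ℕ, IsPermOn Finset.univ π ∧
    ∀ u v, π u < π v → f v ≤ f u := by
  classical
  let e := Fintype.equivFin V
  let g : Fin (Fintype.card V) → ℕᵒᵈ := fun i => OrderDual.toDual (f (e.symm i))
  let σ := Tuple.sort g
  have hm : Monotone (g ∘ σ) := Tuple.monotone_sort g
  refine ⟨fun v => (σ.symm (e v)).val, ⟨?_, ?_, ?_⟩, ?_⟩
  · intro v _
    simp [Finset.card_univ]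
  · intro x _ y _ h
    have := Fin.ext h
    simpa using this
  · intro n hn
    simp [Finset.card_univ] at hn
    exact ⟨e.symm (σ ⟨n, hn⟩), by simp, by simp⟩
  · intro u v h
    have := hm (show σ.symm (e u) ≤ σ.symm (e v) from le_of_lt h)
    simpa [g] using this

theorem tree_desc {α : Type} (T : SimpleGraph α) (hT : T.IsTree) (r : α) :
    ∃ (dep : α → ℕ) (Dn : α → α → Prop), (∀ t, Dn t t) ∧
      (∀ t x y, T.Adj x y → Dn t x → ¬ Dn t y → x = t ∧ dep y < dep t) ∧
      (∀ t x, Dn t x → dep x ≤ dep t → x = t) := by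
  classical
  have hex : ∀ x, ∃ p : T.Walk r x, p.IsPath := fun x => by
    obtain ⟨p, hp, -⟩ := hT.existsUnique_path r x
    exact ⟨p, hp⟩
  choose P hP using hex
  have huniq : ∀ x (q : T.Walk r x), q.IsPath → q = P x := fun x q hq =>
    (hT.existsUnique_path r x).unique hq (hP x)
  refine ⟨fun x => (P x).length, fun t x => t ∈ (P x).support, ?_, ?_, ?_⟩
  · intro t; simp
  · intro t x y hadj hx hy
    have hxy : x ∉ (P y).support := by
      intro hmem
      have h1 := huniq x ((P y).takeUntil x hmem) ((hP y).takeUntil hmem)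
      rw [← h1] at hx
      exact hy ((P y).support_takeUntil_subset_support hmem hx)
    have h2 := huniq x ((P y).concat hadj.symm) ((hP y).concat hxy hadj.symm)
    rw [← h2, SimpleGraph.Walk.support_concat] at hx
    simp at hx
    rcases hx with hx | rfl
    · exact absurd hx hy
    · refine ⟨rfl, ?_⟩
      show (P y).length < (P t).length
      rw [← h2, SimpleGraph.Walk.length_concat]
      omega
  · intro t x hx hle
    have h1 := huniq t ((P x).takeUntil t hx) ((hP x).takeUntil hx)
    by_contra hne
    have h3 := SimpleGraph.Walk.length_takeUntil_lt hx (fun e => hne e.symm)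
    rw [h1] at h3
    simp only at hle
    omega

theorem exists_perm [Nonempty V] (G : SimpleGraph V) (D : TreeDecomp G Finset.univ) :
    ∃ π : V → ℕ, IsPermOn Finset.univ π ∧ ((Finset.univ.sup fun v =>
      (QOn G Finset.univ (Finset.univ.filter fun w => π w < π v) v).ncard : ℕ) : ℤ)
        ≤ D.width := by
  classical
  letI := D.instFintype
  obtain ⟨r⟩ := D.isTree.connected.nonempty
  obtain ⟨dep, Dn, hrefl, hcross, heq⟩ := tree_desc D.tree D.isTree r
  have htop : ∀ v, ∃ t, v ∈ D.bags t ∧ ∀ i, v ∈ D.bags i → dep t ≤ dep i := by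
    intro v
    obtain ⟨i, hi⟩ := D.covers v (Finset.mem_univ _)
    obtain ⟨t, ht, hm⟩ := Set.exists_min_image {i | v ∈ D.bags i} dep (Set.toFinite _) ⟨i, hi⟩
    exact ⟨t, ht, hm⟩
  choose top htop1 htop2 using htop
  obtain ⟨π, hπ, hord⟩ := exists_order (fun v => dep (top v))
  have hinj : ∀ x y, π x = π y → x = y := fun x y h => hπ.injOn (by simp) (by simp) h
  refine ⟨π, hπ, ?_⟩
  have key : ∀ v, QOn G Finset.univ (Finset.univ.filter fun w => π w < π v) v
      ⊆ ((D.bags (top v)).erase v : Finset V) := by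
    rintro v w ⟨-, h1, h2, h3⟩
    simp at h1
    have hlt : π v < π w := lt_of_le_of_ne h1 (fun h => h2 (hinj _ _ h).symm)
    simp only [Finset.coe_erase, Set.mem_diff, Set.mem_singleton_iff, Finset.mem_coe]
    refine ⟨?_, h2⟩
    by_contra hw
    -- one node below gives all nodes below
    have hall : ∀ y, π y ≤ π v ∨ y = w → (∃ i, y ∈ D.bags i ∧ Dn (top v) i) →
        ∀ j, y ∈ D.bags j → Dn (top v) j := by
      rintro y hy ⟨i, hi, hd⟩ j hj
      refine reach_closed D.tree {k | y ∈ D.bags k} (Dn (top v)) ?_ ⟨i, hi⟩ ⟨j, hj⟩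
        (D.subtree y i j hi hj) hd
      intro a ha b hb hab hda
      by_contra hdb
      obtain ⟨rfl, hdep⟩ := hcross _ _ _ hab hda hdb
      rcases hy with hy | rfl
      · have c1 := htop2 y b hb
        have c2 : dep (top v) ≤ dep (top y) := by
          rcases hy.lt_or_eq with hy | hy
          · exact hord _ _ hy
          · rw [hinj _ _ hy]
        omega
      · exact hw ha
    have hfin := reach_closed G _ (fun x => ∀ j, x ∈ D.bags j → Dn (top v) j) ?_ _ _ h3
      (hall v (Or.inl le_rfl) ⟨top v, htop1 v, hrefl _⟩)
    · have := heq _ _ (hfin _ (htop1 w)) (hord _ _ hlt)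
      exact hw (this ▸ htop1 w)
    · intro x hx y hy hxy hPx
      obtain ⟨i, hi1, hi2⟩ := D.covers_edges x y (Finset.mem_univ _) (Finset.mem_univ _) hxy
      refine hall y ?_ ⟨i, hi2, hPx i hi1⟩
      simp at hy
      rcases hy with rfl | rfl | hy
      · exact Or.inl le_rfl
      · exact Or.inr rfl
      · exact Or.inl hy.le
  have hb : (Finset.univ.sup fun v =>
      (QOn G Finset.univ (Finset.univ.filter fun w => π w < π v) v).ncard) + 1 ≤
      Finset.univ.sup fun i => (D.bags i).card := by
    obtain ⟨v, -, hv⟩ := Finset.exists_mem_eq_sup (Finset.univ : Finset V) Finset.univ_nonempty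
      (fun v => (QOn G Finset.univ (Finset.univ.filter fun w => π w < π v) v).ncard)
    rw [hv]
    have c1 := Set.ncard_le_ncard (key v) (Set.toFinite _)
    rw [Set.ncard_coe_finset] at c1
    have c2 := Finset.card_erase_add_one (htop1 v)
    have c3 := Finset.le_sup (f := fun i => (D.bags i).card) (Finset.mem_univ (top v))
    exact le_trans (Nat.succ_le_succ c1) (c2.le.trans c3)
  show _ ≤ ((Finset.univ.sup fun i => (D.bags i).card : ℕ) : ℤ) - 1
  omega

theorem stmt3 [Nonempty V] (G : SimpleGraph V) :
    tw G = (TW G Finset.univ : ℤ) := by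
  obtain ⟨π₀, hπ₀, -⟩ := exists_order (fun _ : V => 0)
  obtain ⟨D₀, -⟩ := exists_decomp G π₀ hπ₀
  apply le_antisymm
  · obtain ⟨π, hπ, hm⟩ : TW G Finset.univ ∈ { m | ∃ π : V → ℕ, IsPermOn Finset.univ π ∧
      m = Finset.univ.sup fun v =>
        (QOn G Finset.univ (Finset.univ.filter fun w => π w < π v) v).ncard } :=
      Nat.sInf_mem ⟨_, π₀, hπ₀, rfl⟩
    obtain ⟨D, hD⟩ := exists_decomp G π hπ
    rw [hm]
    refine le_trans (csInf_le ⟨-1, ?_⟩ ⟨D, rfl⟩) hD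
    rintro _ ⟨D', rfl⟩
    unfold TreeDecomp.width
    have := Int.natCast_nonneg (@Finset.sup ℕ D'.ι _ _ (@Finset.univ _ D'.instFintype) fun i => (D'.bags i).card)
    omega
  · refine le_csInf ⟨_, D₀, rfl⟩ ?_
    rintro _ ⟨D, rfl⟩
    obtain ⟨π, hπ, h⟩ := exists_perm G D
    refine le_trans ?_ h
    apply Int.ofNat_le.2
    exact Nat.sInf_le ⟨π, hπ, rfl⟩
end

section
/- Let G = (V,E) be a finite simple graph and let χ ⊊ V be a proper subset of its vertices. Let 𝒞 be the set of vertex sets of the connected components of G[V ∖ χ]. Then tw(G,χ) = max_{C ∈ 𝒞} tw(G[C ∪ χ], χ). -/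
variable {V : Type} [Fintype V] [DecidableEq V]

theorem glue_isTree {α β : Type} [Finite α] [Finite β] {S : SimpleGraph α} {T : SimpleGraph β}
    (hS : S.IsTree) (hT : T.IsTree) (a : α) (b : β) :
    ((S ⊕g T) ⊔ SimpleGraph.edge (Sum.inl a) (Sum.inr b)).IsTree := by
  have hc : ((S ⊕g T) ⊔ SimpleGraph.edge (Sum.inl a) (Sum.inr b)).Connected :=
    hS.connected.sum_sup_edge hT.connected
  rw [SimpleGraph.isTree_iff_connected_and_card] at *
  refine ⟨hc, le_antisymm ?_ hc.card_vert_le_card_edgeSet_add_one⟩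
  have hsub : ((S ⊕g T) ⊔ SimpleGraph.edge (Sum.inl a) (Sum.inr b)).edgeSet ⊆
      (Sym2.map Sum.inl '' S.edgeSet ∪ Sym2.map Sum.inr '' T.edgeSet) ∪
        {s(Sum.inl a, Sum.inr b)} := by
    intro e he
    induction e using Sym2.ind with
    | _ x y =>
      rw [SimpleGraph.mem_edgeSet, SimpleGraph.sup_adj] at he
      rcases he with he | he
      · left
        rcases x with x | x <;> rcases y with y | y
        · left; exact ⟨s(x, y), by simpa using he, rfl⟩
        · simp at he
        · simp at he
        · right; exact ⟨s(x, y), by simpa using he, rfl⟩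
      · right
        rw [SimpleGraph.edge_adj] at he
        simp only [Set.mem_singleton_iff, Sym2.eq_iff]
        tauto
  have h1 := Set.ncard_le_ncard hsub (Set.toFinite _)
  have h2 := Set.ncard_union_le (Sym2.map Sum.inl '' S.edgeSet ∪ Sym2.map Sum.inr '' T.edgeSet)
        {s((Sum.inl a : α ⊕ β), Sum.inr b)}
  have h3 := Set.ncard_union_le (Sym2.map (Sum.inl : α → α ⊕ β) '' S.edgeSet)
    (Sym2.map (Sum.inr : β → α ⊕ β) '' T.edgeSet)
  have h4 := Set.ncard_image_le (f := Sym2.map (Sum.inl : α → α ⊕ β)) (Set.toFinite S.edgeSet)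
  have h5 := Set.ncard_image_le (f := Sym2.map (Sum.inr : β → α ⊕ β)) (Set.toFinite T.edgeSet)
  rw [Set.ncard_singleton] at h2
  have hS2 := hS.2
  have hT2 := hT.2
  rw [Nat.card_coe_set_eq] at hS2 hT2 ⊢
  rw [Nat.card_sum]
  omega

theorem induce_reach_map {α β : Type} {S : SimpleGraph α} {T : SimpleGraph β} (f : α → β)
    (hf : ∀ x y, S.Adj x y → T.Adj (f x) (f y)) {s : Set α} {t : Set β}
    (hst : ∀ x ∈ s, f x ∈ t) {i j : α} (hi : i ∈ s) (hj : j ∈ s)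
    (h : (S.induce s).Reachable ⟨i, hi⟩ ⟨j, hj⟩) :
    (T.induce t).Reachable ⟨f i, hst i hi⟩ ⟨f j, hst j hj⟩ :=
  h.map (⟨fun k => ⟨f k.1, hst k.1 k.2⟩, fun {x y} hxy => hf _ _ hxy⟩ :
    S.induce s →g T.induce t)

theorem width_le_iff {G : SimpleGraph V} {W : Finset V} (D : TreeDecomp G W) (m : ℤ) :
    D.width ≤ m ↔ (∀ i, ((D.bags i).card : ℤ) ≤ m + 1) := by
  letI := D.instFintype
  have hne : Nonempty D.ι := D.isTree.connected.nonempty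
  unfold TreeDecomp.width
  constructor
  · intro h i
    have := Finset.le_sup (f := fun i => (D.bags i).card) (Finset.mem_univ i)
    have h2 : ((D.bags i).card : ℤ) ≤ ((Finset.univ.sup fun i => (D.bags i).card : ℕ) : ℤ) := by
      exact_mod_cast this
    linarith
  · intro h
    obtain ⟨i, -, hi⟩ := Finset.exists_mem_eq_sup (Finset.univ : Finset D.ι)
      Finset.univ_nonempty (fun i => (D.bags i).card)
    rw [hi]
    have := h i
    linarith

theorem neg_one_le_width {G : SimpleGraph V} {W : Finset V} (D : TreeDecomp G W) :
    -1 ≤ D.width := by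
  unfold TreeDecomp.width
  have := Int.natCast_nonneg (letI := D.instFintype; Finset.univ.sup fun i => (D.bags i).card)
  linarith

theorem glue_decomp {G : SimpleGraph V} {W₁ W₂ χ : Finset V} (D₁ : TreeDecomp G W₁)
    (D₂ : TreeDecomp G W₂) {a : D₁.ι} {b : D₂.ι} (ha : D₁.bags a = χ) (hb : D₂.bags b = χ)
    (hint : W₁ ∩ W₂ ⊆ χ)
    (hedge : ∀ u v, u ∈ W₁ → v ∈ W₂ → G.Adj u v → u ∈ W₂ ∨ v ∈ W₁) (m : ℤ)
    (h₁ : D₁.width ≤ m) (h₂ : D₂.width ≤ m) :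
    ∃ D : TreeDecomp G (W₁ ∪ W₂), (∃ i, D.bags i = χ) ∧ D.width ≤ m := by
  letI := D₁.instFintype
  letI := D₂.instFintype
  have hx : ∀ (v : V) (i : D₁.ι) (j : D₂.ι), v ∈ D₁.bags i → v ∈ D₂.bags j → v ∈ χ :=
    fun v i j hi hj => hint (Finset.mem_inter.2 ⟨D₁.bags_subset i hi, D₂.bags_subset j hj⟩)
  let T := (D₁.tree ⊕g D₂.tree) ⊔ SimpleGraph.edge (Sum.inl a) (Sum.inr b)
  let B : D₁.ι ⊕ D₂.ι → Finset V := Sum.elim D₁.bags D₂.bags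
  have hl : ∀ x y, D₁.tree.Adj x y → T.Adj (Sum.inl x) (Sum.inl y) := fun x y h =>
    Or.inl (by simpa using h)
  have hr : ∀ x y, D₂.tree.Adj x y → T.Adj (Sum.inr x) (Sum.inr y) := fun x y h =>
    Or.inl (by simpa using h)
  have hab : T.Adj (Sum.inl a) (Sum.inr b) := Or.inr (by simp [SimpleGraph.edge_adj])
  have rl : ∀ (v : V) (i j : D₁.ι) (hi : v ∈ D₁.bags i) (hj : v ∈ D₁.bags j),
      (T.induce {k | v ∈ B k}).Reachable ⟨Sum.inl i, hi⟩ ⟨Sum.inl j, hj⟩ := fun v i j hi hj =>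
    induce_reach_map Sum.inl hl (fun x hx => hx) hi hj (D₁.subtree v i j hi hj)
  have rr : ∀ (v : V) (i j : D₂.ι) (hi : v ∈ D₂.bags i) (hj : v ∈ D₂.bags j),
      (T.induce {k | v ∈ B k}).Reachable ⟨Sum.inr i, hi⟩ ⟨Sum.inr j, hj⟩ := fun v i j hi hj =>
    induce_reach_map Sum.inr hr (fun x hx => hx) hi hj (D₂.subtree v i j hi hj)
  have rlr : ∀ (v : V) (i : D₁.ι) (j : D₂.ι) (hi : v ∈ D₁.bags i) (hj : v ∈ D₂.bags j),
      (T.induce {k | v ∈ B k}).Reachable ⟨Sum.inl i, hi⟩ ⟨Sum.inr j, hj⟩ := by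
    intro v i j hi hj
    have hv := hx v i j hi hj
    have hva : v ∈ D₁.bags a := ha ▸ hv
    have hvb : v ∈ D₂.bags b := hb ▸ hv
    refine (rl v i a hi hva).trans (SimpleGraph.Reachable.trans ?_ (rr v b j hvb hj))
    exact SimpleGraph.Adj.reachable hab
  refine ⟨⟨D₁.ι ⊕ D₂.ι, T, glue_isTree D₁.isTree D₂.isTree a b, B, ?_, ?_, ?_, ?_⟩,
    ⟨Sum.inl a, ha⟩, ?_⟩
  · rintro (i | i)
    · exact (D₁.bags_subset i).trans Finset.subset_union_left
    · exact (D₂.bags_subset i).trans Finset.subset_union_right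
  · intro v hv
    rcases Finset.mem_union.1 hv with hv | hv
    · obtain ⟨i, hi⟩ := D₁.covers v hv
      exact ⟨Sum.inl i, hi⟩
    · obtain ⟨i, hi⟩ := D₂.covers v hv
      exact ⟨Sum.inr i, hi⟩
  · intro u v hu hv huv
    have e1 : u ∈ W₁ → v ∈ W₁ → ∃ i, u ∈ B i ∧ v ∈ B i := fun hu hv => by
      obtain ⟨i, hi⟩ := D₁.covers_edges u v hu hv huv
      exact ⟨Sum.inl i, hi⟩
    have e2 : u ∈ W₂ → v ∈ W₂ → ∃ i, u ∈ B i ∧ v ∈ B i := fun hu hv => by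
      obtain ⟨i, hi⟩ := D₂.covers_edges u v hu hv huv
      exact ⟨Sum.inr i, hi⟩
    have h3 := hedge u v
    have h4 := hedge v u
    have h5 := huv.symm
    rw [Finset.mem_union] at hu hv
    tauto
  · rintro v (i | i) (j | j) hi hj
    · exact rl v i j hi hj
    · exact rlr v i j hi hj
    · exact (rlr v j i hj hi).symm
    · exact rr v i j hi hj
  · rw [width_le_iff] at *
    rintro (i | i)
    · exact h₁ i
    · exact h₂ i

theorem exists_decomp_s7 (G : SimpleGraph V) {W χ : Finset V} (h : χ ⊆ W) :
    ∃ D : TreeDecomp G W, ∃ i, D.bags i = χ := by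
  let B : Unit ⊕ Unit → Finset V := Sum.elim (fun _ => W) (fun _ => χ)
  let T : SimpleGraph (Unit ⊕ Unit) := ((⊥ : SimpleGraph Unit) ⊕g (⊥ : SimpleGraph Unit)) ⊔
    SimpleGraph.edge (Sum.inl ()) (Sum.inr ())
  have hab : T.Adj (Sum.inl ()) (Sum.inr ()) := Or.inr (by simp [SimpleGraph.edge_adj])
  refine ⟨⟨Unit ⊕ Unit, T, glue_isTree .of_subsingleton .of_subsingleton () (), B, ?_, ?_, ?_, ?_⟩,
    Sum.inr (), rfl⟩
  · rintro (i | i)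
    · exact subset_rfl
    · exact h
  · exact fun v hv => ⟨Sum.inl (), hv⟩
  · exact fun u v hu hv _ => ⟨Sum.inl (), hu, hv⟩
  · rintro v (⟨⟨⟩⟩ | ⟨⟨⟩⟩) (⟨⟨⟩⟩ | ⟨⟨⟩⟩) hi hj
    · exact .refl _
    · exact SimpleGraph.Adj.reachable hab
    · exact SimpleGraph.Adj.reachable hab.symm
    · exact .refl _

theorem triv_decomp (G : SimpleGraph V) (χ : Finset V) :
    ∃ D : TreeDecomp G χ, ∀ i, D.bags i = χ :=
  ⟨⟨Unit, ⊥, .of_subsingleton, fun _ => χ, fun _ => subset_rfl, fun _ hv => ⟨(), hv⟩,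
    fun _ _ hu hv _ => ⟨(), hu, hv⟩, fun _ _ _ _ _ => .refl _⟩, fun _ => rfl⟩

theorem restrict_decomp {G : SimpleGraph V} {W χ : Finset V} (D : TreeDecomp G Finset.univ)
    (hχ : χ ⊆ W) (hD : ∃ i, D.bags i = χ) :
    ∃ D' : TreeDecomp G W, (∃ i, D'.bags i = χ) ∧ D'.width ≤ D.width := by
  letI := D.instFintype
  obtain ⟨a, ha⟩ := hD
  refine ⟨⟨D.ι, D.tree, D.isTree, fun i => D.bags i ∩ W, fun i => Finset.inter_subset_right,
    ?_, ?_, ?_⟩, ⟨a, ?_⟩, ?_⟩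
  · intro v hv
    obtain ⟨i, hi⟩ := D.covers v (Finset.mem_univ _)
    exact ⟨i, Finset.mem_inter.2 ⟨hi, hv⟩⟩
  · intro u v hu hv huv
    obtain ⟨i, hi⟩ := D.covers_edges u v (Finset.mem_univ _) (Finset.mem_univ _) huv
    exact ⟨i, Finset.mem_inter.2 ⟨hi.1, hu⟩, Finset.mem_inter.2 ⟨hi.2, hv⟩⟩
  · intro v i j hi hj
    have hi' := Finset.mem_inter.1 hi
    have hj' := Finset.mem_inter.1 hj
    exact induce_reach_map (s := {k | v ∈ D.bags k}) (t := {k | v ∈ D.bags k ∩ W}) id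
      (fun _ _ h => h)
      (fun x hx => Finset.mem_inter.2 ⟨hx, hi'.2⟩) hi'.1 hj'.1 (D.subtree v i j hi'.1 hj'.1)
  · simp only [ha]
    exact Finset.inter_eq_left.2 hχ
  · rw [width_le_iff]
    intro i
    have h := (width_le_iff D _).1 le_rfl i
    refine le_trans ?_ h
    exact_mod_cast Finset.card_le_card Finset.inter_subset_left

theorem bdd_widths (G : SimpleGraph V) (W χ : Finset V) :
    BddBelow { w : ℤ | ∃ D : TreeDecomp G W, (∃ i, D.bags i = χ) ∧ D.width = w } :=
  ⟨-1, by rintro _ ⟨D, -, rfl⟩; exact neg_one_le_width D⟩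

theorem twBagOn_le {G : SimpleGraph V} {W χ : Finset V} (D : TreeDecomp G W)
    (h : ∃ i, D.bags i = χ) : twBagOn G W χ ≤ D.width :=
  csInf_le (bdd_widths G W χ) ⟨D, h, rfl⟩

theorem twBagOn_attained (G : SimpleGraph V) {W χ : Finset V} (h : χ ⊆ W) :
    ∃ D : TreeDecomp G W, (∃ i, D.bags i = χ) ∧ D.width = twBagOn G W χ := by
  obtain ⟨D, hD⟩ := exists_decomp_s7 G h
  exact Int.csInf_mem (s := { w : ℤ | ∃ D : TreeDecomp G W, (∃ i, D.bags i = χ) ∧ D.width = w })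
    ⟨_, D, hD, rfl⟩ (bdd_widths G W χ)

theorem singleton_conn (G : SimpleGraph V) (v : V) :
    (G.induce ({v} : Set V)).Connected :=
  (SimpleGraph.IsTree.of_subsingleton (G := G.induce ({v} : Set V))).connected

theorem exists_comp (G : SimpleGraph V) {A U : Finset V} (hUA : U ⊆ A)
    (hU : ∀ u ∈ U, ∀ v ∈ A, G.Adj u v → v ∈ U) (hne : U.Nonempty) :
    ∃ C, C ⊆ U ∧ IsCompOf G A C := by
  classical
  obtain ⟨v, hv⟩ := hne
  let F : Finset (Finset V) := U.powerset.filter fun C : Finset V => C.Nonempty ∧ (G.induce (C : Set V)).Connected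
  have hF : F.Nonempty := by
    refine ⟨{v}, ?_⟩
    simp only [F, Finset.mem_filter, Finset.mem_powerset, Finset.singleton_subset_iff, hv,
      Finset.singleton_nonempty, true_and, Finset.coe_singleton]
    rw [Finset.coe_singleton]
    exact singleton_conn G v
  obtain ⟨C, hC, hmax⟩ := Finset.exists_max_image F Finset.card hF
  simp only [F, Finset.mem_filter, Finset.mem_powerset] at hC hmax
  obtain ⟨hCU, hCn, hCc⟩ := hC
  refine ⟨C, hCU, hCn, hCU.trans hUA, hCc, ?_⟩
  intro u hu w hw huw
  by_contra hwC
  have hwU := hU u (hCU hu) w hw huw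
  have := hmax (insert w C) ⟨Finset.insert_subset hwU hCU, Finset.insert_nonempty _ _, by
    rw [Finset.coe_insert, Set.insert_eq, Set.union_comm]
    exact SimpleGraph.connected_induce_union hCc.preconnected (singleton_conn G w).preconnected
      hu (Set.mem_singleton w) huw⟩
  rw [Finset.card_insert_of_notMem hwC] at this
  omega

theorem decomp_of_comps (G : SimpleGraph V) (χ : Finset V) (m : ℤ) (hm : (χ.card : ℤ) ≤ m + 1)
    (hC : ∀ C, IsCompOf G (Finset.univ \ χ) C →
      ∃ D : TreeDecomp G (C ∪ χ), (∃ i, D.bags i = χ) ∧ D.width ≤ m) (n : ℕ) :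
    ∀ U : Finset V, U.card ≤ n → U ⊆ Finset.univ \ χ →
      (∀ u ∈ U, ∀ v ∈ Finset.univ \ χ, G.Adj u v → v ∈ U) →
      ∃ D : TreeDecomp G (U ∪ χ), (∃ i, D.bags i = χ) ∧ D.width ≤ m := by
  induction n with
  | zero =>
    intro U hU _ _
    have : U = ∅ := by simpa using hU
    subst this
    rw [Finset.empty_union]
    obtain ⟨D, hD⟩ := triv_decomp G χ
    obtain ⟨i⟩ := D.isTree.connected.nonempty
    exact ⟨D, ⟨i, hD i⟩, (width_le_iff D m).2 fun i => by rw [hD i]; exact hm⟩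
  | succ n ih =>
    intro U hU hUA hcl
    rcases U.eq_empty_or_nonempty with rfl | hne
    · exact ih ∅ (by simp) hUA hcl
    obtain ⟨C, hCU, hCc⟩ := exists_comp G hUA hcl hne
    have hpos := hCc.1.card_pos
    have hcard := Finset.card_sdiff_add_card_eq_card hCU
    obtain ⟨D₂, ⟨b, hb⟩, hw₂⟩ := ih (U \ C) (by omega) (Finset.sdiff_subset.trans hUA) (by
      intro u hu v hv huv
      rw [Finset.mem_sdiff] at hu ⊢
      exact ⟨hcl u hu.1 v hv huv, fun hvC =>
        hu.2 (hCc.2.2.2 v hvC u (hUA hu.1) huv.symm)⟩)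
    obtain ⟨D₁, ⟨a, ha⟩, hw₁⟩ := hC C hCc
    have key := glue_decomp D₁ D₂ ha hb (by
      intro x; simp only [Finset.mem_inter, Finset.mem_union, Finset.mem_sdiff]; tauto) (by
      intro u v hu hv huv
      simp only [Finset.mem_union, Finset.mem_sdiff] at hu hv ⊢
      rcases hu with hu | hu
      · rcases hv with hv | hv
        · exact Or.inr (Or.inl (hCc.2.2.2 u hu v (hUA hv.1) huv))
        · exact Or.inr (Or.inr hv)
      · exact Or.inl (Or.inr hu)) m hw₁ hw₂
    have he : (C ∪ χ) ∪ ((U \ C) ∪ χ) = U ∪ χ := by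
      ext x
      have := @hCU x
      simp only [Finset.mem_union, Finset.mem_sdiff]
      tauto
    rwa [he] at key

theorem stmt7 (G : SimpleGraph V) (χ : Finset V) (hχ : χ ⊂ Finset.univ) :
    twBag G χ = sSup {w : ℤ | ∃ C : Finset V,
      IsCompOf G (Finset.univ \ χ) C ∧ w = twBagOn G (C ∪ χ) χ} := by
  have hle : ∀ C : Finset V, twBagOn G (C ∪ χ) χ ≤ twBag G χ := by
    intro C
    obtain ⟨D, hD, hw⟩ := twBagOn_attained G (Finset.subset_univ χ)
    obtain ⟨D', hD', hw'⟩ := restrict_decomp (W := C ∪ χ) D Finset.subset_union_right hD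
    exact (twBagOn_le D' hD').trans (hw'.trans hw.le)
  have hcl : ∀ u ∈ Finset.univ \ χ, ∀ v ∈ Finset.univ \ χ, G.Adj u v → v ∈ Finset.univ \ χ :=
    fun _ _ _ hv _ => hv
  obtain ⟨C₀, -, hC₀⟩ := exists_comp G (A := Finset.univ \ χ) subset_rfl hcl
    (Finset.sdiff_nonempty.2 hχ.2)
  have hbdd : BddAbove {w : ℤ | ∃ C : Finset V,
      IsCompOf G (Finset.univ \ χ) C ∧ w = twBagOn G (C ∪ χ) χ} :=
    ⟨twBag G χ, by rintro _ ⟨C, -, rfl⟩; exact hle C⟩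
  apply le_antisymm
  · set m := sSup {w : ℤ | ∃ C : Finset V,
      IsCompOf G (Finset.univ \ χ) C ∧ w = twBagOn G (C ∪ χ) χ} with hm
    have hC : ∀ C, IsCompOf G (Finset.univ \ χ) C →
        ∃ D : TreeDecomp G (C ∪ χ), (∃ i, D.bags i = χ) ∧ D.width ≤ m := by
      intro C hC
      obtain ⟨D, hD, hw⟩ := twBagOn_attained G (W := C ∪ χ) (χ := χ) Finset.subset_union_right
      exact ⟨D, hD, hw.le.trans (le_csSup hbdd ⟨C, hC, rfl⟩)⟩
    have hcard : (χ.card : ℤ) ≤ m + 1 := by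
      obtain ⟨D, ⟨i, hi⟩, hw⟩ := hC C₀ hC₀
      have := (width_le_iff D m).1 hw i
      rwa [hi] at this
    have key := decomp_of_comps G χ m hcard hC _ (Finset.univ \ χ) le_rfl subset_rfl hcl
    rw [Finset.sdiff_union_of_subset (Finset.subset_univ χ)] at key
    obtain ⟨D, hD, hw⟩ := key
    exact (twBagOn_le D hD).trans hw
  · refine csSup_le ⟨_, C₀, hC₀, rfl⟩ ?_
    rintro _ ⟨C, -, rfl⟩
    exact hle C
end

section
/- Let G = (V,E) be a finite simple graph on n = |V| vertices and let p ≥ 1 and c ≥ 1 be integers. Then the number of potential maximal cliques Ω of G with |Ω| = p such that G[V ∖ Ω] has a connected component with exactly c vertices is at most n · C(n−c, p−1), where C(·,·) denotes the binomial coefficient. -/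
variable {V : Type} [Fintype V] [DecidableEq V]

open Classical in
noncomputable def nbF (G : SimpleGraph V) (Z : Finset V) : Finset V :=
  Finset.univ.filter fun v => v ∉ Z ∧ ∃ u ∈ Z, G.Adj u v

theorem mem_nbF (G : SimpleGraph V) (Z : Finset V) (v : V) :
    v ∈ nbF G Z ↔ v ∉ Z ∧ ∃ u ∈ Z, G.Adj u v := by
  simp [nbF]

/-- every set inside `Z` containing `x` and closed under adjacency in `Z` equals `Z` -/
def ConnFrom (G : SimpleGraph V) (A Z : Finset V) : Prop :=
  ∀ A' : Finset V, A ⊆ A' → A' ⊆ Z → (∀ u ∈ A', ∀ v ∈ Z, G.Adj u v → v ∈ A') → A' = Z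

open Classical in
noncomputable def famF (G : SimpleGraph V) (A B : Finset V) (m f : ℕ) : Finset (Finset V) :=
  Finset.univ.filter fun Z => A ⊆ Z ∧ Disjoint B Z ∧ ConnFrom G A Z ∧
    (nbF G Z).card = f + B.card ∧ (Z ∪ nbF G Z).card ≤ m + A.card + B.card

theorem mem_famF (G : SimpleGraph V) (A B : Finset V) (m f : ℕ) (Z : Finset V) :
    Z ∈ famF G A B m f ↔ A ⊆ Z ∧ Disjoint B Z ∧ ConnFrom G A Z ∧
    (nbF G Z).card = f + B.card ∧ (Z ∪ nbF G Z).card ≤ m + A.card + B.card := by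
  simp [famF]

theorem famF_sub_nb (G : SimpleGraph V) (A B Z : Finset V) (hB : B ⊆ nbF G A)
    (hA : A ⊆ Z) (hd : Disjoint B Z) : B ⊆ nbF G Z := by
  intro b hb
  obtain ⟨_, u, hu, hub⟩ := (mem_nbF _ _ _).1 (hB hb)
  exact (mem_nbF _ _ _).2 ⟨Finset.disjoint_left.1 hd hb, u, hA hu, hub⟩

theorem famF_card (G : SimpleGraph V) (m : ℕ) : ∀ (f : ℕ) (A B : Finset V), B ⊆ nbF G A →
    (famF G A B m f).card ≤ m.choose f := by
  induction m with
  | zero =>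
    intro f A B hB
    by_cases hN : nbF G A ⊆ B
    · have hs : famF G A B 0 f ⊆ if f = 0 then {A} else ∅ := by
        intro Z hZ
        obtain ⟨hA, hd, hc, hf, _⟩ := (mem_famF _ _ _ _ _ _).1 hZ
        have : A = Z := by
          apply hc A subset_rfl hA
          intro u hu v hv huv
          by_contra hvA
          exact Finset.disjoint_left.1 hd (hN ((mem_nbF _ _ _).2 ⟨hvA, u, hu, huv⟩)) hv
        subst this
        have : nbF G A = B := Finset.Subset.antisymm hN hB
        rw [this] at hf
        have : f = 0 := by omega
        simp [this]
      refine (Finset.card_le_card hs).trans ?_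
      split_ifs with h <;> simp [h]
    · obtain ⟨w, hw, hwB⟩ := Finset.not_subset.1 hN
      have : famF G A B 0 f = ∅ := by
        rw [Finset.eq_empty_iff_forall_notMem]
        intro Z hZ
        obtain ⟨hA, hd, hc, hf, hm⟩ := (mem_famF _ _ _ _ _ _).1 hZ
        have hBZ := famF_sub_nb G A B Z hB hA hd
        obtain ⟨hwA, u, hu, huw⟩ := (mem_nbF _ _ _).1 hw
        have hsub : insert w (A ∪ B) ⊆ Z ∪ nbF G Z := by
          intro y hy
          rw [Finset.mem_insert, Finset.mem_union] at hy
          rw [Finset.mem_union]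
          rcases hy with rfl | hy | hy
          · by_cases h : y ∈ Z
            · exact Or.inl h
            · exact Or.inr ((mem_nbF _ _ _).2 ⟨h, u, hA hu, huw⟩)
          · exact Or.inl (hA hy)
          · exact Or.inr (hBZ hy)
        have h1 := Finset.card_le_card hsub
        rw [Finset.card_insert_of_notMem (by simp [hwA, hwB]),
          Finset.card_union_of_disjoint (hd.symm.mono_left hA)] at h1
        omega
      simp [this]
  | succ m ih =>
    intro f A B hB
    by_cases hN : nbF G A ⊆ B
    · have hs : famF G A B (m+1) f ⊆ if f = 0 then {A} else ∅ := by
        intro Z hZ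
        obtain ⟨hA, hd, hc, hf, _⟩ := (mem_famF _ _ _ _ _ _).1 hZ
        have : A = Z := by
          apply hc A subset_rfl hA
          intro u hu v hv huv
          by_contra hvA
          exact Finset.disjoint_left.1 hd (hN ((mem_nbF _ _ _).2 ⟨hvA, u, hu, huv⟩)) hv
        subst this
        have : nbF G A = B := Finset.Subset.antisymm hN hB
        rw [this] at hf
        have : f = 0 := by omega
        simp [this]
      refine (Finset.card_le_card hs).trans ?_
      split_ifs with h <;> simp [h]
    · obtain ⟨w, hw, hwB⟩ := Finset.not_subset.1 hN
      obtain ⟨hwA, u, hu, huw⟩ := (mem_nbF _ _ _).1 hw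
      have key1 : ∀ Z ∈ famF G A B (m+1) f, w ∈ Z → Z ∈ famF G (insert w A) B m f := by
        intro Z hZ hwZ
        obtain ⟨hA, hd, hc, hf, hm⟩ := (mem_famF _ _ _ _ _ _).1 hZ
        refine (mem_famF _ _ _ _ _ _).2 ⟨Finset.insert_subset hwZ hA, hd, ?_, hf, ?_⟩
        · intro A' h1 h2 h3
          exact hc A' ((Finset.subset_insert _ _).trans h1) h2 h3
        · rw [Finset.card_insert_of_notMem hwA]; omega
      have key2 : ∀ Z ∈ famF G A B (m+1) f, w ∉ Z →
          ∃ g, f = g + 1 ∧ Z ∈ famF G A (insert w B) m g := by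
        intro Z hZ hwZ
        obtain ⟨hA, hd, hc, hf, hm⟩ := (mem_famF _ _ _ _ _ _).1 hZ
        have hBZ : insert w B ⊆ nbF G Z := famF_sub_nb G A _ Z
          (Finset.insert_subset hw hB) hA (by simp [hwZ, hd])
        have h1 := Finset.card_le_card hBZ
        have h2 := Finset.card_insert_of_notMem hwB
        refine ⟨f - 1, by omega, (mem_famF _ _ _ _ _ _).2
          ⟨hA, by simp [hwZ, hd], hc, by omega, by omega⟩⟩
      have i1 := ih f (insert w A) B (by
        intro b hb
        obtain ⟨hbA, v, hv, hvb⟩ := (mem_nbF _ _ _).1 (hB hb)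
        refine (mem_nbF _ _ _).2 ⟨?_, v, Finset.mem_insert_of_mem hv, hvb⟩
        rw [Finset.mem_insert]
        rintro (rfl | h)
        · exact hwB hb
        · exact hbA h)
      cases f with
      | zero =>
        refine (Finset.card_le_card (t := famF G (insert w A) B m 0) ?_).trans (by simpa using i1)
        intro Z hZ
        by_cases hwZ : w ∈ Z
        · exact key1 Z hZ hwZ
        · obtain ⟨g, hg, _⟩ := key2 Z hZ hwZ
          omega
      | succ f =>
        have i2 := ih f A (insert w B) (Finset.insert_subset hw hB)
        have hs : famF G A B (m+1) (f+1) ⊆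
            famF G A (insert w B) m f ∪ famF G (insert w A) B m (f+1) := by
          intro Z hZ
          rw [Finset.mem_union]
          by_cases hwZ : w ∈ Z
          · exact Or.inr (key1 Z hZ hwZ)
          · obtain ⟨g, hg, h⟩ := key2 Z hZ hwZ
            obtain rfl : f = g := by omega
            exact Or.inl h
        have h3 := (Finset.card_le_card hs).trans (Finset.card_union_le _ _)
        rw [Nat.choose_succ_succ']
        omega

theorem conn_closed (G : SimpleGraph V) (D : Finset V) (hD : (G.induce (D : Set V)).Connected)
    (P : V → Prop) (hP : ∀ a b, a ∈ D → b ∈ D → G.Adj a b → P a → P b)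
    (d e : V) (hd : d ∈ D) (he : e ∈ D) (h : P d) : P e := by
  obtain ⟨w⟩ := hD.preconnected ⟨d, hd⟩ ⟨e, he⟩
  have : ∀ (a b : (D : Set V)), (G.induce (D : Set V)).Walk a b → P a → P b := by
    intro a b w
    induction w with
    | nil => exact id
    | cons h _ ih => exact fun ha => ih (hP _ _ (Subtype.property _) (Subtype.property _) h ha)
  exact this _ _ w h

theorem pmc_repr (G : SimpleGraph V) (Ω C : Finset V) (hΩ : PotMaxClique G Ω)
    (hC : IsCompOf G (Finset.univ \ Ω) C) :
    ∃ x Z, Z ∈ famF G {x} ∅ (Fintype.card V - C.card) (Ω.card - 1) ∧ insert x (nbF G Z) = Ω := by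
  classical
  have hne := hΩ.1 C hC
  obtain ⟨hCn, hCs, -, hCc⟩ := hC
  have hCΩ : ∀ y ∈ C, y ∉ Ω := fun y hy => by simpa using hCs hy
  obtain ⟨x, hx, hxC⟩ : ∃ x ∈ Ω, x ∉ nbhdSet G C := by
    by_contra! hcon
    apply hne
    apply Set.Subset.antisymm
    · rintro v ⟨hv, u, hu, huv⟩
      by_contra hvΩ
      exact hv (hCc u hu v (by simpa using hvΩ) huv)
    · exact fun v hv => hcon v hv
  let R : V → V → Prop := fun a b => G.Adj a b ∧ b ∉ Ω
  let Z : Finset V := Finset.univ.filter fun v => Relation.ReflTransGen R x v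
  have hZ : ∀ v, v ∈ Z ↔ Relation.ReflTransGen R x v := by simp [Z]
  have hxZ : x ∈ Z := (hZ x).2 .refl
  have hstep : ∀ a b, a ∈ Z → G.Adj a b → b ∉ Ω → b ∈ Z := fun a b ha hab hb =>
    (hZ b).2 (((hZ a).1 ha).tail ⟨hab, hb⟩)
  have hZΩ : ∀ v ∈ Z, v = x ∨ v ∉ Ω := by
    intro v hv
    rcases Relation.ReflTransGen.cases_tail ((hZ v).1 hv) with h | ⟨_, _, h⟩
    · exact Or.inl h
    · exact Or.inr h.2
  have hnb : nbF G Z = Ω.erase x := by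
    ext v
    rw [mem_nbF, Finset.mem_erase]
    constructor
    · rintro ⟨hv, u, hu, huv⟩
      refine ⟨fun h => hv (h ▸ hxZ), ?_⟩
      by_contra h
      exact hv (hstep u v hu huv h)
    · rintro ⟨hvx, hvΩ⟩
      refine ⟨fun h => ?_, ?_⟩
      · rcases hZΩ v h with h | h
        · exact hvx h
        · exact h hvΩ
      · rcases hΩ.2 x hx v hvΩ (Ne.symm hvx) with h | ⟨D, hD, hxD, hvD⟩
        · exact ⟨x, hxZ, h⟩
        · obtain ⟨_, d, hd, hdx⟩ := hxD
          obtain ⟨_, e, he, hev⟩ := hvD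
          have hDΩ : ∀ y ∈ D, y ∉ Ω := fun y hy => by simpa using hD.2.1 hy
          exact ⟨e, conn_closed G D hD.2.2.1 (· ∈ Z)
            (fun a b _ hb hab ha => hstep a b ha hab (hDΩ b hb)) d e hd he
            (hstep x d hxZ hdx.symm (hDΩ d hd)), hev⟩
  have hZC : ∀ v ∈ Z, v ∉ C := by
    intro v hv
    have h := (hZ v).1 hv
    clear hv
    induction h with
    | refl => exact fun h => hCΩ _ h hx
    | @tail a b hxa hab ih =>
      intro hbC
      rcases hZΩ a ((hZ a).2 hxa) with rfl | h
      · exact hxC ⟨ih, b, hbC, hab.1.symm⟩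
      · exact ih (hCc b hbC a (by simpa using h) hab.1.symm)
  refine ⟨x, Z, (mem_famF _ _ _ _ _ _).2 ⟨by simpa using hxZ, by simp, ?_, ?_, ?_⟩, ?_⟩
  · intro A' h1 h2 h3
    apply Finset.Subset.antisymm h2
    intro v hv
    have h := (hZ v).1 hv
    clear hv
    induction h with
    | refl => exact h1 (by simp)
    | @tail a b hxa hab ih => exact h3 a ih b ((hZ b).2 (hxa.tail hab)) hab.1
  · rw [hnb, Finset.card_erase_of_mem hx]; simp
  · have hdis : Disjoint (Z ∪ nbF G Z) C := by
      rw [Finset.disjoint_left]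
      intro v hv hvC
      rw [Finset.mem_union, hnb] at hv
      rcases hv with hv | hv
      · exact hZC v hv hvC
      · exact hCΩ v hvC (Finset.mem_of_mem_erase hv)
    have := Finset.card_le_univ ((Z ∪ nbF G Z) ∪ C)
    rw [Finset.card_union_of_disjoint hdis] at this
    omega
  · rw [hnb, Finset.insert_erase hx]

theorem stmt14 (G : SimpleGraph V) (p c : ℕ) (hp : 1 ≤ p) (hc : 1 ≤ c) :
    {Ω : Finset V | PotMaxClique G Ω ∧ Ω.card = p ∧
        ∃ C : Finset V, IsCompOf G (Finset.univ \ Ω) C ∧ C.card = c}.ncard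
      ≤ Fintype.card V * (Fintype.card V - c).choose (p - 1) := by
  classical
  let T : Finset (Finset V) := Finset.univ.biUnion fun x : V =>
    (famF G {x} ∅ (Fintype.card V - c) (p - 1)).image fun Z => insert x (nbF G Z)
  have hT : T.card ≤ Fintype.card V * (Fintype.card V - c).choose (p - 1) := by
    apply Finset.card_biUnion_le_card_mul
    intro x _
    exact Finset.card_image_le.trans (famF_card G _ _ _ _ (by simp))
  refine le_trans ?_ hT
  rw [← Set.ncard_coe_finset]
  apply Set.ncard_le_ncard _ (Finset.finite_toSet _)
  rintro Ω ⟨hΩ, rfl, C, hC, rfl⟩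
  obtain ⟨x, Z, hZ, h⟩ := pmc_repr G Ω C hΩ hC
  simp only [T, Finset.coe_biUnion, Finset.coe_image, Set.mem_iUnion]
  exact ⟨x, by simp, Z, hZ, h⟩
end
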